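/- For every fixed integer d ≥ 2 and every ε > 0 there exists p₀ = p₀(d, ε) such that for every prime p > p₀ the Olson constant of F_p^d satisfies OL(F_p^d) ≤ (d-1+ε)p. Equivalently: for every prime p > p₀, every subset X ⊆ F_p^d with |X| ≥ (d-1+ε)p contains a nonempty subset B ⊆ X with Σ_{x∈B} x = 0. -/

import Mathlib

/-!
Put `K = 𝔽_p`, and call a set dispersed if it meets no coset of a hyperplane in too many points. By
a Fourier estimate, any set `A` of at most half of the space loses a sizeable part to its complement
under translation by some difference of two elements of a dispersed set `Z`. Hence the sums of `r`
distinct elements of `Z` fill the whole space unless `r` is extreme. A set that is not dispersed has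
many points in a coset of a hyperplane, where one repeats the argument. So every set of more than
`ε p / 4` vectors contains a rich subset, whose sums of `r` distinct elements cover a line
`r • a + K • w` unless `r` is extreme.

Split `X` into disjoint rich pieces `Z i` with parameters `a i`, `w i`, up to `ε p / 4` elements.
There are fewer than `p` pieces, so some functional `f` is nonzero at all the `w i`, and each line
meets `ker f` in `r • b i` with `b i` independent of `r`. It remains to solve `∑ r i • b i = 0` in
the `(d - 1)`-dimensional space `ker f`, nontrivially and with `r i` zero or in the admissible
range of `Z i`. These ranges have total size more than `(d - 1) p`, so the Chevalley–Warning
theorem with restricted variables gives a solution.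
-/

open Finset Module
open scoped Pointwise

section RestrictedVariables

open MvPolynomial

variable {ι R K : Type*} [Fintype ι]

theorem coeff_prod_prod_X_sub_C [CommRing R] [Nontrivial R] (S : ι → Finset R) :
    (∏ i, ∏ s ∈ S i, (X i - C s : MvPolynomial ι R)).coeff
      (∑ i, Finsupp.single i #(S i)) = 1 := by
  let _ : LinearOrder ι := WellOrderingRel.isWellOrder.linearOrder
  have h := (MonomialOrder.lex (σ := ι)).coeff_prod_sum_degree
    (fun x : Σ _ : ι, R ↦ (X x.1 - C x.2 : MvPolynomial ι R)) (univ.sigma S)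
  have hmonic (x : Σ _ : ι, R) :
      (MonomialOrder.lex (σ := ι)).leadingCoeff (X x.1 - C x.2 : MvPolynomial ι R) = 1 :=
    MonomialOrder.monic_X_sub_C _ _ _
  simp only [hmonic, prod_const_one] at h
  simpa [sum_sigma, prod_sigma, MonomialOrder.degree_X_sub_C] using h

theorem totalDegree_prod_prod_X_sub_C_le [CommRing R] [Nontrivial R] (S : ι → Finset R) :
    (∏ i, ∏ s ∈ S i, (X i - C s : MvPolynomial ι R)).totalDegree ≤ ∑ i, #(S i) := by
  refine (totalDegree_finsetProd _ _).trans (sum_le_sum fun i _ ↦ ?_)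
  refine (totalDegree_finsetProd _ _).trans ((sum_le_card_nsmul _ _ 1 fun s _ ↦ ?_).trans (by simp))
  exact (totalDegree_sub_C_le _ _).trans (totalDegree_X i).le

theorem sum_card_sub_one_le_totalDegree [Field K] {S : ι → Finset K} {a : ι → K}
    (ha : ∀ i, a i ∈ S i) {F : MvPolynomial ι K} (hFa : eval a F ≠ 0)
    (hF : ∀ x : ι → K, (∀ i, x i ∈ S i) → x ≠ a → eval x F = 0) :
    ∑ i, (#(S i) - 1) ≤ F.totalDegree := by
  classical
  by_contra! hdeg
  let H : MvPolynomial ι K := ∏ i, ∏ s ∈ (S i).erase (a i), (X i - C s)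
  let t : ι →₀ ℕ := ∑ i, Finsupp.single i #((S i).erase (a i))
  have ht (i) : t i = #(S i) - 1 := by
    simp [t, Finsupp.finsetSum_apply, Finsupp.single_apply, card_erase_of_mem (ha i)]
  have htdeg : t.degree = ∑ i, (#(S i) - 1) := by
    simp only [t, map_sum, Finsupp.degree_single, card_erase_of_mem (ha _)]
  have hHa : eval a H ≠ 0 := by
    simp only [H, map_prod, map_sub, eval_X, eval_C]
    exact prod_ne_zero_iff.2 fun i _ ↦ prod_ne_zero_iff.2 fun s hs ↦
      sub_ne_zero.2 (ne_of_mem_erase hs).symm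
  have hH {x : ι → K} (hx : ∀ i, x i ∈ S i) (hxa : x ≠ a) : eval x H = 0 := by
    obtain ⟨i, hi⟩ := Function.ne_iff.1 hxa
    simp only [H, map_prod]
    exact prod_eq_zero (mem_univ i) (prod_eq_zero (mem_erase.2 ⟨hi, hx i⟩) (by simp))
  -- `G` vanishes on the whole grid although its coefficient at `t`, which comes from `H`, does not.
  let G : MvPolynomial ι K := F - C (eval a F / eval a H) * H
  have hGcoeff : G.coeff t ≠ 0 := by
    have hFcoeff : F.coeff t = 0 := coeff_eq_zero_of_totalDegree_lt (hdeg.trans_eq htdeg.symm)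
    rw [coeff_sub, hFcoeff, coeff_C_mul, coeff_prod_prod_X_sub_C, mul_one, zero_sub]
    exact neg_ne_zero.2 (div_ne_zero hFa hHa)
  have hGdeg : G.totalDegree = t.degree := by
    refine le_antisymm ((totalDegree_sub _ _).trans (max_le (by omega) ?_))
      (le_totalDegree (mem_support_iff.2 hGcoeff))
    refine (totalDegree_mul _ _).trans ?_
    rw [totalDegree_C, zero_add, htdeg, ← sum_congr rfl fun i _ ↦ card_erase_of_mem (ha i)]
    exact totalDegree_prod_prod_X_sub_C_le _
  obtain ⟨x, hx, hGx⟩ := combinatorial_nullstellensatz_exists_eval_nonzero G t hGcoeff hGdeg S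
    fun i ↦ ht i ▸ Nat.sub_lt (card_pos.2 ⟨a i, ha i⟩) one_pos
  refine hGx ?_
  by_cases hxa : x = a
  · simp [G, hxa, div_mul_cancel₀ _ hHa]
  · simp [G, hF x hx hxa, hH hx hxa]

/-- The Chevalley–Warning theorem with restricted variables (Brink). -/
theorem exists_ne_forall_eval_eq_zero [Field K] [Fintype K] {κ : Type*} {L : Finset κ}
    {f : κ → MvPolynomial ι K} {S : ι → Finset K} {a : ι → K} (ha : ∀ i, a i ∈ S i)
    (hfa : ∀ l ∈ L, eval a (f l) = 0)
    (hdeg : (∑ l ∈ L, (f l).totalDegree) * (Fintype.card K - 1) < ∑ i, (#(S i) - 1)) :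
    ∃ x : ι → K, (∀ i, x i ∈ S i) ∧ x ≠ a ∧ ∀ l ∈ L, eval x (f l) = 0 := by
  have hq : Fintype.card K - 1 ≠ 0 := Nat.sub_ne_zero_of_lt Fintype.one_lt_card
  let F : MvPolynomial ι K := ∏ l ∈ L, (1 - f l ^ (Fintype.card K - 1))
  have hFdeg : F.totalDegree ≤ (∑ l ∈ L, (f l).totalDegree) * (Fintype.card K - 1) := by
    rw [sum_mul]
    refine (totalDegree_finsetProd _ _).trans (sum_le_sum fun l _ ↦ ?_)
    refine (totalDegree_sub _ _).trans (max_le (by simp) ?_)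
    exact (totalDegree_pow _ _).trans_eq (mul_comm _ _)
  have hFa : eval a F ≠ 0 := by
    simp +contextual [F, map_prod, hfa, zero_pow hq]
  by_contra! h
  refine (hFdeg.trans_lt hdeg).not_ge (sum_card_sub_one_le_totalDegree ha hFa fun x hx hxa ↦ ?_)
  obtain ⟨l, hl, hfl⟩ := h x hx hxa
  rw [map_prod]
  exact prod_eq_zero hl (by simp [FiniteField.pow_card_sub_one_eq_one _ hfl])

theorem exists_ne_zero_sum_smul_eq_zero [Field K] [Fintype K] {V : Type*} [AddCommGroup V]
    [Module K V] [FiniteDimensional K V] {S : ι → Finset K} (hS : ∀ i, 0 ∈ S i) (v : ι → V)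
    (hcard : finrank K V * (Fintype.card K - 1) < ∑ i, (#(S i) - 1)) :
    ∃ x : ι → K, (∀ i, x i ∈ S i) ∧ x ≠ 0 ∧ ∑ i, x i • v i = 0 := by
  let b := finBasis K V
  let f (l : Fin (finrank K V)) : MvPolynomial ι K := ∑ i, C (b.repr (v i) l) * X i
  have hfdeg (l) : (f l).totalDegree ≤ 1 := totalDegree_finsetSum_le fun i _ ↦
    (totalDegree_mul _ _).trans (by simp)
  obtain ⟨x, hx, hx0, hfx⟩ := exists_ne_forall_eval_eq_zero (L := univ) (f := f) (a := 0) hS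
    (by simp [f]) (lt_of_le_of_lt (Nat.mul_le_mul_right _
      ((sum_le_card_nsmul _ _ 1 fun l _ ↦ hfdeg l).trans (by simp))) hcard)
  refine ⟨x, hx, hx0, b.ext_elem fun l ↦ ?_⟩
  simpa [f, mul_comm] using hfx l (mem_univ l)

end RestrictedVariables

section Dispersed

variable {W : Type*} [AddCommGroup W]

theorem exists_exp_eq_of_norm_one_sub_lt {m t : ℕ} {ζ : ℂ} (hm : 0 < m) (ht : 0 < t)
    (hζ : ζ ^ m = 1) (hnear : ‖1 - ζ‖ < 4 / t) :
    ∃ k : ℤ, |(k : ℝ)| * t ≤ m ∧ Complex.exp (k * (2 * Real.pi * Complex.I) / m) = ζ := by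
  have hζ1 : ‖ζ‖ = 1 := Complex.norm_eq_one_of_pow_eq_one hζ hm.ne'
  have hζarg : Complex.exp (ζ.arg * Complex.I) = ζ := by
    simpa [hζ1] using Complex.norm_mul_exp_arg_mul_I ζ
  obtain ⟨k, hk⟩ : ∃ k : ℤ, m * (ζ.arg * Complex.I) = k * (2 * Real.pi * Complex.I) := by
    rw [← Complex.exp_eq_one_iff, Complex.exp_nat_mul, hζarg, hζ]
  have hkarg : m * |ζ.arg| = |(k : ℝ)| * (2 * Real.pi) := by
    have h : m * ζ.arg = k * (2 * Real.pi) := by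
      have := congrArg Complex.im hk
      simpa using this
    simpa [abs_mul, abs_of_pos Real.pi_pos] using congrArg abs h
  have hangle : |ζ.arg| ≤ Real.pi / 2 * ‖1 - ζ‖ := by
    rw [← Complex.angle_one_left (norm_ne_zero_iff.1 (hζ1 ▸ one_ne_zero))]
    exact Complex.angle_le_mul_norm_sub norm_one hζ1
  refine ⟨k, ?_, ?_⟩
  · rw [lt_div_iff₀ (by positivity)] at hnear
    refine le_of_mul_le_mul_right ?_ (by positivity : 0 < 2 * Real.pi)
    calc |(k : ℝ)| * t * (2 * Real.pi) = m * |ζ.arg| * t := by rw [hkarg]; ring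
      _ ≤ m * (Real.pi / 2 * ‖1 - ζ‖) * t := by gcongr
      _ = m * (Real.pi / 2) * (‖1 - ζ‖ * t) := by ring
      _ ≤ m * (Real.pi / 2) * 4 := by gcongr
      _ = m * (2 * Real.pi) := by ring
  · rw [← hk, mul_div_cancel_left₀ _ (by exact_mod_cast hm.ne'), hζarg]

theorem mul_card_nthRootsFinset_filter_near_one_le {m t : ℕ} (htm : t ≤ m) :
    t * #{ζ ∈ Polynomial.nthRootsFinset m (1 : ℂ) | ‖1 - ζ‖ < 4 / t} ≤ 3 * m := by
  rcases t.eq_zero_or_pos with rfl | ht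
  · simp
  have hm : 0 < m := ht.trans_le htm
  have hsub : {ζ ∈ Polynomial.nthRootsFinset m (1 : ℂ) | ‖1 - ζ‖ < 4 / t} ⊆
      (Icc (-(m / t : ℕ) : ℤ) (m / t : ℕ)).image
        fun k : ℤ ↦ Complex.exp (k * (2 * Real.pi * Complex.I) / m) := by
    intro ζ hζ
    obtain ⟨hζm, hnear⟩ := mem_filter.1 hζ
    rw [Polynomial.mem_nthRootsFinset hm] at hζm
    obtain ⟨k, hkt, hk⟩ := exists_exp_eq_of_norm_one_sub_lt hm ht hζm hnear
    refine mem_image.2 ⟨k, ?_, hk⟩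
    rw [mem_Icc, ← abs_le, ← Int.natCast_natAbs, Nat.cast_le, Nat.le_div_iff_mul_le ht]
    rw [← Int.cast_abs, ← Int.natCast_natAbs] at hkt
    exact_mod_cast hkt
  calc t * _ ≤ t * (2 * (m / t) + 1) := by
        refine Nat.mul_le_mul_left _ ((card_le_card hsub).trans (card_image_le.trans_eq ?_))
        rw [Int.card_Icc]
        omega
    _ = 2 * (m / t * t) + t := by ring
    _ ≤ 3 * m := by
      have := Nat.div_mul_le_self m t
      omega

theorem norm_one_sub_mul_norm_geom_sum_le {z : ℂ} (hz : ‖z‖ = 1) (n : ℕ) :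
    ‖1 - z‖ * ‖∑ j ∈ range n, z ^ j‖ ≤ 2 := by
  rw [← norm_mul, mul_neg_geom_sum]
  refine (norm_sub_le _ _).trans ?_
  rw [norm_one, norm_pow, hz, one_pow]
  norm_num

/-- A finite subset `Z` of an abelian group is `N`-dispersed if every nontrivial complex character
takes each of its values at most `N` times on `Z`. -/
def IsDispersed (N : ℕ) (Z : Finset W) : Prop :=
  ∀ ψ : AddChar W ℂ, ψ ≠ 0 → ∀ ζ : ℂ, #{x ∈ Z | ψ x = ζ} ≤ N

theorem IsDispersed.mono {N : ℕ} {Y Z : Finset W} (hZ : IsDispersed N Z) (hYZ : Y ⊆ Z) :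
    IsDispersed N Y := fun ψ hψ ζ ↦
  (card_le_card (filter_subset_filter _ hYZ)).trans (hZ ψ hψ ζ)

theorem IsDispersed.vadd [Finite W] [DecidableEq W] {N : ℕ} {Z : Finset W}
    (hZ : IsDispersed N Z) (a : W) :
    IsDispersed N (a +ᵥ Z) := by
  intro ψ hψ ζ
  have hsub : {x ∈ a +ᵥ Z | ψ x = ζ} ⊆ a +ᵥ ({x ∈ Z | ψ x = ζ * ψ (-a)} : Finset W) := by
    intro x hx
    obtain ⟨hxZ, rfl⟩ := mem_filter.1 hx
    obtain ⟨y, hy, rfl⟩ := mem_vadd_finset.1 hxZ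
    refine vadd_mem_vadd_finset (mem_filter.2 ⟨hy, ?_⟩)
    rw [← AddChar.map_add_eq_mul, vadd_eq_add, add_neg_cancel_comm]
  exact (card_le_card hsub).trans (card_vadd_finset a _ |>.trans_le (hZ ψ hψ _))

theorem mul_card_filter_near_one_le {m t N : ℕ} {Z : Finset W} (hm : ∀ x : W, m • x = 0)
    (ht : 0 < t) (htm : t ≤ m) {ψ : AddChar W ℂ} (hψ : ∀ ζ : ℂ, #{x ∈ Z | ψ x = ζ} ≤ N) :
    t * #{x ∈ Z | ‖1 - ψ x‖ < 4 / t} ≤ 3 * m * N := by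
  classical
  let T : Finset ℂ := {ζ ∈ Polynomial.nthRootsFinset m (1 : ℂ) | ‖1 - ζ‖ < 4 / t}
  have hmaps : ∀ x ∈ ({x ∈ Z | ‖1 - ψ x‖ < 4 / t} : Finset W), ψ x ∈ T := fun x hx ↦
    mem_filter.2 ⟨(Polynomial.mem_nthRootsFinset (ht.trans_le htm) 1).2 (by
      rw [← AddChar.map_nsmul_eq_pow, hm, AddChar.map_zero_eq_one]), (mem_filter.1 hx).2⟩
  calc t * #{x ∈ Z | ‖1 - ψ x‖ < 4 / t} ≤ t * (#T * N) := by
        gcongr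
        rw [card_eq_sum_card_fiberwise hmaps, ← smul_eq_mul]
        refine sum_le_card_nsmul _ _ _ fun ζ _ ↦ le_trans (card_le_card ?_) (hψ ζ)
        exact filter_subset_filter _ (filter_subset _ _)
    _ = t * #T * N := (mul_assoc _ _ _).symm
    _ ≤ 3 * m * N := Nat.mul_le_mul_right _ (mul_card_nthRootsFinset_filter_near_one_le htm)

theorem norm_sum_sum_nsmul_le [Finite W] {m t N : ℕ} {Z : Finset W} (hm : ∀ x : W, m • x = 0)
    (htm : t ≤ m) {ψ : AddChar W ℂ} (hψ : ∀ ζ : ℂ, #{x ∈ Z | ψ x = ζ} ≤ N)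
    (hN : 6 * m * N ≤ t * #Z) :
    ‖∑ a ∈ Z, ∑ j ∈ range t, ψ (j • a)‖ ≤ 3 / 4 * (#Z * t) := by
  rcases t.eq_zero_or_pos with rfl | ht
  · simp
  have hnear : 2 * (#{a ∈ Z | ‖1 - ψ a‖ < 4 / t} : ℝ) ≤ #Z := by
    have h := mul_card_filter_near_one_le hm ht htm hψ
    have : 2 * #{a ∈ Z | ‖1 - ψ a‖ < 4 / t} ≤ #Z := by
      refine Nat.le_of_mul_le_mul_left ?_ ht
      linarith
    exact_mod_cast this
  have hterm (a : W) : ‖∑ j ∈ range t, ψ (j • a)‖ ≤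
      t / 2 + if ‖1 - ψ a‖ < 4 / t then (t : ℝ) / 2 else 0 := by
    simp only [AddChar.map_nsmul_eq_pow]
    split_ifs with h
    · refine (norm_sum_le _ _).trans ?_
      simp
    · rw [not_lt, div_le_iff₀ (by positivity)] at h
      have := norm_one_sub_mul_norm_geom_sum_le (ψ.norm_apply a) t
      nlinarith [norm_nonneg (∑ j ∈ range t, ψ a ^ j)]
  calc ‖∑ a ∈ Z, ∑ j ∈ range t, ψ (j • a)‖
      ≤ ∑ a ∈ Z, (t / 2 + if ‖1 - ψ a‖ < 4 / t then (t : ℝ) / 2 else 0) :=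
        (norm_sum_le _ _).trans (sum_le_sum fun a _ ↦ hterm a)
    _ = #Z * (t / 2) + #{a ∈ Z | ‖1 - ψ a‖ < 4 / t} * (t / 2) := by
        rw [sum_add_distrib, ← sum_filter, sum_const, sum_const, nsmul_eq_mul, nsmul_eq_mul]
    _ ≤ 3 / 4 * (#Z * t) := by nlinarith [(Nat.cast_nonneg t : (0 : ℝ) ≤ t)]

variable [DecidableEq W]

theorem card_vadd_sdiff_add_card_vadd_inter (a : W) (A : Finset W) :
    #((a +ᵥ A) \ A) + #((a +ᵥ A) ∩ A) = #A := by
  rw [card_sdiff_add_card_inter, card_vadd_finset]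

theorem card_nsmul_vadd_sdiff_le (A : Finset W) (a : W) (j : ℕ) :
    #((j • a +ᵥ A) \ A) ≤ j * #((a +ᵥ A) \ A) := by
  induction j with
  | zero => simp
  | succ j ih =>
    have hshift : (((j + 1) • a +ᵥ A) \ (j • a +ᵥ A)) = j • a +ᵥ ((a +ᵥ A) \ A) := by
      rw [vadd_finset_sdiff, vadd_vadd, succ_nsmul]
    calc #(((j + 1) • a +ᵥ A) \ A)
        ≤ #(((j + 1) • a +ᵥ A) \ (j • a +ᵥ A)) + #((j • a +ᵥ A) \ A) :=
          (card_le_card (sdiff_triangle _ _ _)).trans (card_union_le _ _)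
      _ ≤ #((a +ᵥ A) \ A) + j * #((a +ᵥ A) \ A) := by
          rw [hshift, card_vadd_finset]
          gcongr
      _ = (j + 1) * #((a +ᵥ A) \ A) := by ring

variable [Fintype W]

theorem sum_norm_sq_mul_addChar_apply (A : Finset W) (g : W) :
    ∑ ψ : AddChar W ℂ, ((‖∑ x ∈ A, ψ x‖ ^ 2 : ℝ) : ℂ) * ψ g =
      Fintype.card W * #((g +ᵥ A) ∩ A) := by
  have hsq (ψ : AddChar W ℂ) : ((‖∑ x ∈ A, ψ x‖ ^ 2 : ℝ) : ℂ) * ψ g =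
      ∑ x ∈ A, ∑ y ∈ A, ψ (g + x - y) := by
    rw [Complex.ofReal_pow, ← Complex.mul_conj', map_sum, sum_mul_sum, sum_mul]
    refine sum_congr rfl fun x _ ↦ ?_
    rw [sum_mul]
    refine sum_congr rfl fun y _ ↦ ?_
    rw [sub_eq_add_neg, AddChar.map_add_eq_mul, AddChar.map_add_eq_mul, AddChar.map_neg_eq_conj]
    ring
  have hinter : #((g +ᵥ A) ∩ A) = #{x ∈ A | g + x ∈ A} := by
    have himage : (g +ᵥ A) ∩ A = ({x ∈ A | g + x ∈ A} : Finset W).image (g + ·) := by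
      ext y
      simp only [mem_inter, mem_vadd_finset, mem_image, mem_filter, vadd_eq_add]
      aesop
    rw [himage, card_image_of_injective _ (add_right_injective g)]
  calc ∑ ψ : AddChar W ℂ, ((‖∑ x ∈ A, ψ x‖ ^ 2 : ℝ) : ℂ) * ψ g
      = ∑ x ∈ A, ∑ y ∈ A, ∑ ψ : AddChar W ℂ, ψ (g + x - y) := by
        simp only [hsq]
        rw [sum_comm]
        exact sum_congr rfl fun x _ ↦ sum_comm
    _ = Fintype.card W * #((g +ᵥ A) ∩ A) := by
        simp [AddChar.sum_apply_eq_ite, sub_eq_zero, hinter, ← sum_filter, mul_comm]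

theorem card_mul_sum_card_vadd_inter_le {κ : Type*} (s : Finset κ) (f : κ → W) {c : ℝ}
    (hc : ∀ ψ : AddChar W ℂ, ψ ≠ 0 → ‖∑ k ∈ s, ψ (f k)‖ ≤ c) (A : Finset W) :
    (Fintype.card W : ℝ) * ∑ k ∈ s, #((f k +ᵥ A) ∩ A) ≤
      #s * #A ^ 2 + c * (Fintype.card W * #A - #A ^ 2) := by
  have hfourier : ((Fintype.card W * ∑ k ∈ s, #((f k +ᵥ A) ∩ A) : ℕ) : ℂ) =
      ∑ ψ : AddChar W ℂ, ((‖∑ x ∈ A, ψ x‖ ^ 2 : ℝ) : ℂ) * ∑ k ∈ s, ψ (f k) := by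
    simp only [mul_sum]
    rw [sum_comm, Nat.cast_sum]
    refine sum_congr rfl fun k _ ↦ ?_
    rw [Nat.cast_mul, sum_norm_sq_mul_addChar_apply]
  have hparseval : ∑ ψ : AddChar W ℂ, ‖∑ x ∈ A, ψ x‖ ^ 2 = (Fintype.card W * #A : ℝ) := by
    have h := sum_norm_sq_mul_addChar_apply A 0
    simp only [AddChar.map_zero_eq_one, mul_one, zero_vadd, inter_self] at h
    exact_mod_cast h
  have hnontrivial : ∑ ψ ∈ univ.erase (0 : AddChar W ℂ), ‖∑ x ∈ A, ψ x‖ ^ 2 =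
      (Fintype.card W * #A - #A ^ 2 : ℝ) := by
    rw [← hparseval, ← add_sum_erase _ _ (mem_univ (0 : AddChar W ℂ))]
    simp
  calc (Fintype.card W : ℝ) * ∑ k ∈ s, #((f k +ᵥ A) ∩ A)
      = ‖((Fintype.card W * ∑ k ∈ s, #((f k +ᵥ A) ∩ A) : ℕ) : ℂ)‖ := by
        rw [Complex.norm_natCast]
        push_cast
        rfl
    _ ≤ ∑ ψ : AddChar W ℂ, ‖∑ x ∈ A, ψ x‖ ^ 2 * ‖∑ k ∈ s, ψ (f k)‖ := by
        rw [hfourier]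
        refine (norm_sum_le _ _).trans_eq (sum_congr rfl fun ψ _ ↦ ?_)
        rw [norm_mul, Complex.norm_real, Real.norm_of_nonneg (by positivity)]
    _ ≤ #s * #A ^ 2 + ∑ ψ ∈ univ.erase (0 : AddChar W ℂ), ‖∑ x ∈ A, ψ x‖ ^ 2 * c := by
        rw [← add_sum_erase _ _ (mem_univ (0 : AddChar W ℂ))]
        refine add_le_add (by simp [mul_comm]) (sum_le_sum fun ψ hψ ↦ ?_)
        gcongr
        exact hc ψ (ne_of_mem_erase hψ)
    _ = #s * #A ^ 2 + c * (Fintype.card W * #A - #A ^ 2) := by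
        rw [← sum_mul, hnontrivial, mul_comm c]

/-- Fourier analysis is applied to the progressions `0, a, …, (t - 1) • a` rather than to the `a`
themselves; a single step of the progression then loses a factor `t` by subadditivity, which is
less than what the weaker decay of `‖1 - ψ a‖` would cost. -/
theorem IsDispersed.exists_card_le_mul_card_vadd_sdiff {m t N : ℕ} {Z : Finset W}
    (hZ : IsDispersed N Z) (hm : ∀ x : W, m • x = 0) (htm : t ≤ m) (hN : 6 * m * N < t * #Z)
    {A : Finset W} (hA : 2 * #A ≤ Fintype.card W) :
    ∃ a ∈ Z, #A ≤ 8 * t * #((a +ᵥ A) \ A) := by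
  by_contra! hsmall
  have hne : (Z ×ˢ range t).Nonempty := by
    rw [← card_pos, card_product, card_range, mul_comm]
    omega
  have hlower (x) (hx : x ∈ Z ×ˢ range t) : 7 * #A < 8 * #((x.2 • x.1 +ᵥ A) ∩ A) := by
    obtain ⟨ha, hj⟩ := mem_product.1 hx
    have h1 := hsmall x.1 ha
    have h2 := card_nsmul_vadd_sdiff_le A x.1 x.2
    have h3 := Nat.mul_le_mul_right #((x.1 +ᵥ A) \ A) (mem_range.1 hj).le
    have h4 := card_vadd_sdiff_add_card_vadd_inter (x.2 • x.1) A
    rw [mul_assoc] at h1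
    omega
  have hupper : (8 : ℝ) * ∑ x ∈ Z ×ˢ range t, #((x.2 • x.1 +ᵥ A) ∩ A) ≤ 7 * (#Z * t * #A) := by
    have h := card_mul_sum_card_vadd_inter_le (Z ×ˢ range t) (fun x ↦ x.2 • x.1)
      (c := 3 / 4 * (#Z * t)) (fun ψ hψ ↦ by
        rw [sum_product]
        exact norm_sum_sum_nsmul_le hm htm (hZ ψ hψ) hN.le) A
    have hA' : 2 * (#A : ℝ) ≤ Fintype.card W := by exact_mod_cast hA
    have hpos : (0 : ℝ) < Fintype.card W := by exact_mod_cast Fintype.card_pos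
    have hnonneg : (0 : ℝ) ≤ #Z * t * #A := by positivity
    rw [card_product, card_range, Nat.cast_mul] at h
    refine le_of_mul_le_mul_left ?_ hpos
    nlinarith
  refine (sum_lt_sum_of_nonempty hne hlower).not_ge ?_
  rw [← mul_sum, sum_const, card_product, card_range, smul_eq_mul]
  have h : 8 * ∑ x ∈ Z ×ˢ range t, #((x.2 • x.1 +ᵥ A) ∩ A) ≤ 7 * (#Z * t * #A) := by
    exact_mod_cast hupper
  linarith

theorem IsDispersed.exists_ne_mul_card_le_card_vadd_union_vadd_or {m t N : ℕ} {Z : Finset W}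
    (hZ : IsDispersed N Z) (hm : ∀ x : W, m • x = 0) (htm : t ≤ m)
    (hN : 6 * m * N + t < t * #Z) (A : Finset W) :
    ∃ x ∈ Z, ∃ y ∈ Z, x ≠ y ∧ ((1 + 1 / (8 * t) : ℝ) * #A ≤ #((x +ᵥ A) ∪ (y +ᵥ A)) ∨
      Fintype.card W < 2 * #A) := by
  have ht : 0 < t := Nat.pos_of_ne_zero fun h ↦ by simp [h] at hN
  obtain ⟨x, hx, z, hz, hxz⟩ : ∃ x ∈ Z, ∃ z ∈ Z, x ≠ z :=
    one_lt_card.1 (Nat.lt_of_mul_lt_mul_left (a := t) (by omega))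
  by_cases hA : Fintype.card W < 2 * #A
  · exact ⟨x, hx, z, hz, hxz, .inr hA⟩
  have hcard : 6 * m * N < t * #(-x +ᵥ Z.erase x) := by
    rw [card_vadd_finset, card_erase_of_mem hx, Nat.mul_sub_one]
    omega
  have hZx : IsDispersed N (-x +ᵥ Z.erase x) := (hZ.mono (erase_subset x Z)).vadd (-x)
  obtain ⟨a, ha, hgrow⟩ := hZx.exists_card_le_mul_card_vadd_sdiff hm htm hcard (not_lt.1 hA)
  obtain ⟨y, hy, rfl⟩ := mem_vadd_finset.1 ha
  refine ⟨x, hx, y, mem_of_mem_erase hy, (ne_of_mem_erase hy).symm, .inl ?_⟩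
  have hunion : (x +ᵥ A) ∪ (y +ᵥ A) = x +ᵥ (A ∪ ((-x +ᵥ y) +ᵥ A)) := by
    rw [vadd_finset_union, vadd_vadd, vadd_eq_add, add_neg_cancel_left]
  have hgrow' : (#A : ℝ) ≤ 8 * t * #(((-x +ᵥ y) +ᵥ A) \ A) := by exact_mod_cast hgrow
  rw [hunion, card_vadd_finset, ← union_sdiff_self_eq_union,
    card_union_of_disjoint disjoint_sdiff, Nat.cast_add, add_mul, one_mul, one_div_mul_eq_div]
  gcongr
  rwa [div_le_iff₀' (by positivity)]

end Dispersed

section KSubsetSum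

variable {M : Type*} [AddCommMonoid M] [DecidableEq M]

/-- The set of all sums of `k` distinct elements of `A`, often written `k^∧ A`. -/
def kSubsetSum (k : ℕ) (A : Finset M) : Finset M :=
  (A.powersetCard k).image fun B ↦ ∑ x ∈ B, x

theorem mem_kSubsetSum {k : ℕ} {A : Finset M} {g : M} :
    g ∈ kSubsetSum k A ↔ ∃ B ⊆ A, #B = k ∧ ∑ x ∈ B, x = g := by
  simp only [kSubsetSum, mem_image, mem_powersetCard, and_assoc]

theorem kSubsetSum_mono (k : ℕ) {A B : Finset M} (h : A ⊆ B) : kSubsetSum k A ⊆ kSubsetSum k B :=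
  image_subset_image (powersetCard_mono h)

theorem kSubsetSum_add_kSubsetSum_subset (j k : ℕ) {A B : Finset M} (h : Disjoint A B) :
    kSubsetSum j A + kSubsetSum k B ⊆ kSubsetSum (j + k) (A ∪ B) := by
  refine add_subset_iff.2 fun x hx y hy ↦ ?_
  obtain ⟨C, hCA, rfl, rfl⟩ := mem_kSubsetSum.1 hx
  obtain ⟨D, hDB, rfl, rfl⟩ := mem_kSubsetSum.1 hy
  have hCD : Disjoint C D := h.mono hCA hDB
  exact mem_kSubsetSum.2
    ⟨C ∪ D, union_subset_union hCA hDB, card_union_of_disjoint hCD, sum_union hCD⟩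

theorem vadd_kSubsetSum_subset_kSubsetSum_insert (k : ℕ) {A : Finset M} {z : M} (hz : z ∉ A) :
    z +ᵥ kSubsetSum k A ⊆ kSubsetSum (k + 1) (insert z A) := by
  have hzmem : z ∈ kSubsetSum 1 {z} := mem_kSubsetSum.2 ⟨{z}, by simp⟩
  rw [insert_eq, add_comm k]
  exact (vadd_finset_subset_add hzmem).trans
    (kSubsetSum_add_kSubsetSum_subset 1 k (disjoint_singleton_left.2 hz))

theorem nsmul_add_mem_kSubsetSum_image {U : Type*} [AddCommMonoid U] [DecidableEq U] (x : M)
    (f : U →+ M) {k : ℕ} {A : Finset U} (hinj : Set.InjOn (fun u ↦ x + f u) A) {g : U}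
    (hg : g ∈ kSubsetSum k A) : k • x + f g ∈ kSubsetSum k (A.image fun u ↦ x + f u) := by
  obtain ⟨B, hBA, rfl, rfl⟩ := mem_kSubsetSum.1 hg
  have hB : Set.InjOn (fun u ↦ x + f u) B := hinj.mono hBA
  refine mem_kSubsetSum.2 ⟨_, image_subset_image hBA, card_image_of_injOn hB, ?_⟩
  rw [sum_image hB, sum_add_distrib, sum_const, map_sum]

variable {W : Type*} [AddCommGroup W] [DecidableEq W] [Fintype W]

theorem add_eq_univ_of_card_lt {A B : Finset W} (h : Fintype.card W < #A + #B) :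
    A + B = univ := by
  refine eq_univ_of_forall fun g ↦ ?_
  have hinter : (A ∩ B.image (g - ·)).Nonempty := by
    refine inter_nonempty_of_card_lt_card_add_card (subset_univ _) (subset_univ _) ?_
    rwa [card_image_of_injective _ sub_right_injective, card_univ]
  obtain ⟨x, hx⟩ := hinter
  obtain ⟨hxA, y, hy, rfl⟩ := (mem_inter.1 hx).imp_right mem_image.1
  exact mem_add.2 ⟨g - y, hxA, y, hy, sub_add_cancel g y⟩

theorem IsDispersed.exists_card_kSubsetSum_ge {m t N : ℕ} (n : ℕ) {Z : Finset W}
    (hZ : IsDispersed N Z) (hm : ∀ x : W, m • x = 0) (htm : t ≤ m)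
    (hN : 6 * m * N + 2 * n * t < t * #Z) :
    ∃ B ⊆ Z, #B = 2 * n ∧ ((1 + 1 / (8 * t) : ℝ) ^ n ≤ #(kSubsetSum n B) ∨
      Fintype.card W < 2 * #(kSubsetSum n B)) := by
  induction n with
  | zero => exact ⟨∅, by simp [kSubsetSum]⟩
  | succ n ih =>
    obtain ⟨B, hBZ, hB, hgrowth⟩ := ih (by linarith)
    have hcard : 6 * m * N + t < t * #(Z \ B) := by
      have := card_sdiff_add_card_eq_card hBZ
      rw [← this, hB] at hN
      linarith
    obtain ⟨x, hx, y, hy, hxy, hstep⟩ := (hZ.mono sdiff_subset)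
      |>.exists_ne_mul_card_le_card_vadd_union_vadd_or hm htm hcard (kSubsetSum n B)
    rw [mem_sdiff] at hx hy
    have hsub : (x +ᵥ kSubsetSum n B) ∪ (y +ᵥ kSubsetSum n B) ⊆
        kSubsetSum (n + 1) (insert x (insert y B)) := by
      refine union_subset ?_ ?_
      · refine (vadd_kSubsetSum_subset_kSubsetSum_insert n hx.2).trans (kSubsetSum_mono _ ?_)
        exact insert_subset_insert x (subset_insert y B)
      · exact (vadd_kSubsetSum_subset_kSubsetSum_insert n hy.2).trans
          (kSubsetSum_mono _ (subset_insert x _))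
    have hle := card_le_card hsub
    refine ⟨insert x (insert y B), insert_subset hx.1 (insert_subset hy.1 hBZ), ?_, ?_⟩
    · rw [card_insert_of_notMem (by simp [hxy, hx.2]), card_insert_of_notMem hy.2, hB]
      ring
    have hmono : #(kSubsetSum n B) ≤ #(kSubsetSum (n + 1) (insert x (insert y B))) :=
      ((card_vadd_finset x _).symm.le.trans (card_le_card subset_union_left)).trans hle
    rcases hgrowth, hstep with ⟨hgrowth | hgrowth, hstep | hstep⟩
    · left
      calc (1 + 1 / (8 * t) : ℝ) ^ (n + 1) ≤ (1 + 1 / (8 * t)) * #(kSubsetSum n B) := by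
            rw [pow_succ']
            gcongr
        _ ≤ #(kSubsetSum (n + 1) (insert x (insert y B))) := hstep.trans (by exact_mod_cast hle)
    all_goals right; omega

theorem IsDispersed.mem_kSubsetSum_of_le {m t N n r : ℕ} {Z : Finset W} (hZ : IsDispersed N Z)
    (hm : ∀ x : W, m • x = 0) (htm : t ≤ m) (hN : 6 * m * N + 4 * n * t < t * #Z)
    (hn : Fintype.card W < 2 * (1 + 1 / (8 * t) : ℝ) ^ n) (hr : 2 * n ≤ r)
    (hrZ : r + 2 * n ≤ #Z) (g : W) : g ∈ kSubsetSum r Z := by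
  have hbig {B : Finset W} (h : (1 + 1 / (8 * t) : ℝ) ^ n ≤ #(kSubsetSum n B) ∨
      Fintype.card W < 2 * #(kSubsetSum n B)) : Fintype.card W < 2 * #(kSubsetSum n B) := by
    refine h.elim (fun h ↦ ?_) id
    exact_mod_cast hn.trans_le (mul_le_mul_of_nonneg_left h zero_le_two)
  obtain ⟨B, hBZ, hB, hBbig⟩ := hZ.exists_card_kSubsetSum_ge n hm htm
    (by linarith [Nat.zero_le (n * t)])
  have hZB : 6 * m * N + 2 * n * t < t * #(Z \ B) := by
    rw [← card_sdiff_add_card_eq_card hBZ, hB] at hN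
    linarith
  obtain ⟨D, hDZ, hD, hDbig⟩ := (hZ.mono sdiff_subset).exists_card_kSubsetSum_ge n hm htm hZB
  have hBD : Disjoint B D := disjoint_sdiff.mono_right hDZ
  have hBDZ : B ∪ D ⊆ Z := union_subset hBZ (hDZ.trans sdiff_subset)
  obtain ⟨E, hEZ, hE⟩ : ∃ E ⊆ Z \ (B ∪ D), #E = r - 2 * n := by
    refine exists_subset_card_eq ?_
    rw [card_sdiff_of_subset hBDZ, card_union_of_disjoint hBD]
    omega
  have hall : kSubsetSum n B + kSubsetSum n D = univ :=
    add_eq_univ_of_card_lt (by have := hbig hBbig; have := hbig hDbig; omega)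
  have hgE : g - ∑ x ∈ E, x ∈ kSubsetSum (n + n) (B ∪ D) :=
    kSubsetSum_add_kSubsetSum_subset n n hBD (hall ▸ mem_univ _)
  have hEsum : ∑ x ∈ E, x ∈ kSubsetSum (r - 2 * n) E := mem_kSubsetSum.2 ⟨E, by simp [hE]⟩
  have hrsum : r = n + n + (r - 2 * n) := by omega
  rw [← sub_add_cancel g (∑ x ∈ E, x), hrsum]
  refine kSubsetSum_mono _ (union_subset hBDZ (hEZ.trans sdiff_subset)) ?_
  exact kSubsetSum_add_kSubsetSum_subset _ _ (disjoint_sdiff.mono_right hEZ)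
    (add_mem_add hgE hEsum)

end KSubsetSum

section Rich

theorem exp_le_one_add_one_div_pow {t n : ℕ} (ht : 0 < t) {x : ℝ} (h : 16 * t * x ≤ n) :
    Real.exp x ≤ (1 + 1 / (8 * t)) ^ n := by
  have ht' : (1 : ℝ) ≤ t := by exact_mod_cast ht
  have hlog : 1 / (16 * t) ≤ Real.log (1 + 1 / (8 * t)) := by
    refine le_trans ?_ (Real.le_log_one_add_of_nonneg (by positivity : (0 : ℝ) ≤ 1 / (8 * t)))
    field_simp
    linarith
  rw [← Real.log_le_log_iff (Real.exp_pos x) (by positivity), Real.log_exp, Real.log_pow]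
  calc x ≤ n * (1 / (16 * t)) := by
        rw [mul_one_div, le_div_iff₀ (by positivity)]
        linarith
    _ ≤ n * Real.log (1 + 1 / (8 * t)) := by gcongr

theorem one_le_log_natCast {p : ℕ} (hp : 3 ≤ p) : 1 ≤ Real.log p := by
  have hp' : (3 : ℝ) ≤ p := by exact_mod_cast hp
  exact (Real.le_log_iff_exp_le (by positivity)).2 (Real.exp_one_lt_three.le.trans hp')

theorem four_mul_le_of_mul_log_le {p d : ℕ} {η Q : ℝ} (hp : 3 ≤ p) (hη0 : 0 < η) (hη : η ≤ 1 / 8)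
    (hlog : 442 * d * Real.log p ≤ η * Q) : 4 * (d : ℝ) ≤ Q := by
  have hlog1 : 442 * (d : ℝ) ≤ 442 * d * Real.log p :=
    le_mul_of_one_le_right (by positivity) (one_le_log_natCast hp)
  have hηd : η * (4 * d) ≤ 1 / 8 * (4 * d) := by gcongr
  exact le_of_mul_le_mul_left (by linarith) hη0

theorem lt_floor_div_add_one_lt {p d : ℕ} {Q : ℝ} (hp : 3 ≤ p) (hQ : 4 ≤ Q) (hd : d ≤ Q)
    (hQp : Q ^ 3 ≤ p) : d < ⌊p / Q⌋₊ + 1 ∧ ⌊p / Q⌋₊ + 1 < p := by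
  have hp' : (3 : ℝ) ≤ p := by exact_mod_cast hp
  constructor
  · refine Nat.lt_add_one_iff.2 (Nat.le_floor (hd.trans ?_))
    rw [le_div_iff₀ (by positivity)]
    nlinarith
  · have h : (⌊p / Q⌋₊ : ℝ) ≤ p / 4 := (Nat.floor_le (by positivity)).trans (by gcongr)
    have : (⌊p / Q⌋₊ + 1 : ℝ) < p := by linarith
    exact_mod_cast this

theorem mul_floor_div_cube_add_lt {p t n : ℕ} {Q : ℝ} (hp : 0 < p) (hQ : 0 < Q)
    (ht : 12 * (p / Q ^ 2) ≤ t) (hn : 2 * (n : ℝ) ≤ 1 / 8 * (p / Q)) :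
    6 * p * ⌊p / Q ^ 3⌋₊ + 4 * n * t < t * (⌊p / Q⌋₊ + 1) := by
  have ht0 : (0 : ℝ) < t := lt_of_lt_of_le (by positivity) ht
  have hfloor : (⌊p / Q ^ 3⌋₊ : ℝ) ≤ p / Q ^ 3 := Nat.floor_le (by positivity)
  have hN : 6 * (p : ℝ) * ⌊p / Q ^ 3⌋₊ ≤ t * (p / Q / 2) := calc
    6 * (p : ℝ) * ⌊p / Q ^ 3⌋₊ ≤ 6 * p * (p / Q ^ 3) := by gcongr
    _ = 12 * (p / Q ^ 2) * (p / Q / 2) := by field_simp; ring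
    _ ≤ t * (p / Q / 2) := by gcongr
  have hn4 : 4 * n * t ≤ t * (p / Q / 4) := by nlinarith
  have hM : t * (p / Q) < t * (⌊p / Q⌋₊ + 1) := by
    gcongr
    exact Nat.lt_floor_add_one _
  have hpQ : 0 ≤ t * (p / Q) := by positivity
  have : 6 * (p : ℝ) * ⌊p / Q ^ 3⌋₊ + 4 * n * t < t * (⌊p / Q⌋₊ + 1) := by linarith
  exact_mod_cast this

theorem exists_dispersed_parameters {p d : ℕ} {η Q : ℝ} (hp : 3 ≤ p) (hd : 1 ≤ d)
    (hη0 : 0 < η) (hη : η ≤ 1 / 8) (hlog : 442 * d * Real.log p ≤ η * Q) (hQp : Q ^ 3 ≤ p) :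
    ∃ t n : ℕ, t ≤ p ∧ 6 * p * ⌊p / Q ^ 3⌋₊ + 4 * n * t < t * (⌊p / Q⌋₊ + 1) ∧
      (p : ℝ) ^ d < 2 * (1 + 1 / (8 * t)) ^ n ∧ 2 * (n : ℝ) ≤ η * (p / Q) := by
  have hd' : (1 : ℝ) ≤ d := by exact_mod_cast hd
  have hQ : 4 ≤ Q := by linarith [four_mul_le_of_mul_log_le hp hη0 hη hlog]
  have hp0 : (0 : ℝ) < p := by positivity
  have hpQ2 : 4 ≤ p / Q ^ 2 := by
    rw [le_div_iff₀ (by positivity)]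
    nlinarith [sq_nonneg Q]
  have hdl : 1 ≤ d * Real.log p := one_le_mul_of_one_le_of_one_le hd' (one_le_log_natCast hp)
  obtain ⟨t, htlower, htupper⟩ : ∃ t : ℕ, 12 * (p / Q ^ 2) ≤ t ∧ t ≤ 13 * (p / Q ^ 2) :=
    ⟨_, Nat.le_ceil _, by linarith [Nat.ceil_lt_add_one (by positivity : 0 ≤ 12 * (p / Q ^ 2))]⟩
  have ht1 : (1 : ℝ) ≤ t := by linarith
  obtain ⟨n, hnlower, hnupper⟩ :
      ∃ n : ℕ, 16 * t * (d * Real.log p) ≤ n ∧ n ≤ 17 * (t * (d * Real.log p)) := by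
    have h1 : 1 ≤ t * (d * Real.log p) := one_le_mul_of_one_le_of_one_le ht1 hdl
    exact ⟨_, Nat.le_ceil _, by
      linarith [Nat.ceil_lt_add_one (by positivity : 0 ≤ 16 * t * (d * Real.log p))]⟩
  have hn : 2 * (n : ℝ) ≤ η * (p / Q) := calc
    2 * (n : ℝ) ≤ 34 * (13 * (p / Q ^ 2) * (d * Real.log p)) := by
      have : t * (d * Real.log p) ≤ 13 * (p / Q ^ 2) * (d * Real.log p) := by gcongr
      linarith
    _ = 442 * d * Real.log p * (p / Q ^ 2) := by ring
    _ ≤ η * Q * (p / Q ^ 2) := by gcongr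
    _ = η * (p / Q) := by field_simp
  refine ⟨t, n, ?_, ?_, ?_, hn⟩
  · have h : 13 * (p / Q ^ 2) ≤ p := by
      rw [mul_div_assoc', div_le_iff₀ (by positivity), mul_comm]
      gcongr
      nlinarith
    exact_mod_cast htupper.trans h
  · refine mul_floor_div_cube_add_lt (by omega) (by linarith) htlower (hn.trans ?_)
    gcongr
  · have h := exp_le_one_add_one_div_pow (by exact_mod_cast ht1) hnlower
    rw [Real.exp_nat_mul, Real.exp_log hp0] at h
    have : 0 < (p : ℝ) ^ d := by positivity
    linarith

/-- A finite set `Z` of vectors is rich with margin `C` if, apart from the `C` smallest and the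
`C` largest values of `r`, the sums of `r` distinct elements of `Z` cover a line in a direction
independent of `r`, through a point that is linear in `r`. -/
def IsRich (K : Type*) {V : Type*} [Semiring K] [AddCommMonoid V] [Module K V] [DecidableEq V]
    (C : ℕ) (Z : Finset V) : Prop :=
  ∃ a w : V, w ≠ 0 ∧ ∀ r, C ≤ r → r + C ≤ #Z → ∀ s : K, r • a + s • w ∈ kSubsetSum r Z

theorem IsRich.image_add {K U V : Type*} [Ring K] [AddCommGroup U] [Module K U] [AddCommGroup V]
    [Module K V] [DecidableEq U] [DecidableEq V] {C : ℕ} {Z : Finset U} (hZ : IsRich K C Z)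
    {f : U →ₗ[K] V} (hf : Function.Injective f) (x : V) :
    IsRich K C (Z.image fun u ↦ x + f u) := by
  obtain ⟨a, w, hw, hsums⟩ := hZ
  have hinj : Function.Injective fun u ↦ x + f u := (add_right_injective x).comp hf
  refine ⟨x + f a, f w, (map_ne_zero_iff f hf).2 hw, fun r hr hrZ s ↦ ?_⟩
  rw [card_image_of_injective _ hinj] at hrZ
  have h := nsmul_add_mem_kSubsetSum_image x (f : U →+ V) hinj.injOn (hsums r hr hrZ s)
  simpa [add_assoc] using h

variable {p : ℕ} [Fact p.Prime]

theorem exists_submodule_image_subset_of_not_isDispersed {V : Type*} [AddCommGroup V]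
    [Module (ZMod p) V] [DecidableEq V] {N : ℕ} {Z : Finset V} (hZ : ¬ IsDispersed N Z) :
    ∃ U : Submodule (ZMod p) V, U ≠ ⊤ ∧ ∃ (x : V) (Y : Finset U),
      N < #Y ∧ Y.image (fun u ↦ x + U.subtype u) ⊆ Z := by
  simp only [IsDispersed, not_forall, not_le] at hZ
  classical
  obtain ⟨ψ, hψ, ζ, hcard⟩ := hZ
  obtain ⟨x, hx⟩ := card_pos.1 (hcard.trans_le' (Nat.zero_le N))
  have hψx : ψ x = ζ := (mem_filter.1 hx).2
  let U : Submodule (ZMod p) V := AddSubgroup.toZModSubmodule p ψ.toAddMonoidHom.ker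
  have hU {v : V} : v ∈ U ↔ ψ v = 1 := Iff.rfl
  have hinj : Function.Injective fun u ↦ x + U.subtype u :=
    (add_right_injective x).comp U.injective_subtype
  refine ⟨U, fun htop ↦ hψ (DFunLike.ext _ _ fun v ↦ hU.1 (htop ▸ Submodule.mem_top)), x,
    Z.preimage _ hinj.injOn, hcard.trans_le ?_, image_subset_iff.2 fun u ↦ mem_preimage.1⟩
  rw [card_preimage]
  refine card_le_card fun y hy ↦ ?_
  obtain ⟨hyZ, hψy⟩ := mem_filter.1 hy
  refine mem_filter.2 ⟨hyZ, ⟨y - x, hU.2 ?_⟩, add_sub_cancel x y⟩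
  rw [AddChar.map_sub_eq_div, hψy, hψx, div_self]
  exact hψx ▸ (ψ.val_isUnit x).ne_zero

theorem IsDispersed.exists_isRich {V : Type*} [AddCommGroup V] [Module (ZMod p) V]
    [FiniteDimensional (ZMod p) V] [DecidableEq V] {d : ℕ} {η Q : ℝ} (hp : 3 ≤ p) (hd : 1 ≤ d)
    (hη0 : 0 < η) (hη : η ≤ 1 / 8) (hlog : 442 * d * Real.log p ≤ η * Q) (hQp : Q ^ 3 ≤ p)
    (hV : finrank (ZMod p) V ≤ d) {Z : Finset V} (hZ : IsDispersed ⌊p / Q ^ 3⌋₊ Z)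
    (hZcard : #Z = ⌊p / Q⌋₊ + 1) :
    ∃ C : ℕ, C ≤ η * #Z ∧ d < #Z ∧ #Z < p ∧ IsRich (ZMod p) C Z := by
  obtain ⟨t, n, htp, hN, hn, hnη⟩ := exists_dispersed_parameters hp hd hη0 hη hlog hQp
  have : Finite V := Module.finite_of_finite (ZMod p)
  have : Fintype V := Fintype.ofFinite V
  have hQ : 4 * (d : ℝ) ≤ Q := four_mul_le_of_mul_log_le hp hη0 hη hlog
  have hd' : (1 : ℝ) ≤ d := by exact_mod_cast hd
  have hdZ : d < #Z ∧ #Z < p :=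
    hZcard ▸ lt_floor_div_add_one_lt hp (by linarith) (by linarith) hQp
  obtain ⟨x, -, y, -, hxy⟩ := one_lt_card.1 (hd.trans_lt hdZ.1)
  have hVcard : (Fintype.card V : ℝ) ≤ p ^ d := by
    rw [Module.card_eq_pow_finrank (K := ZMod p), ZMod.card]
    exact_mod_cast Nat.pow_le_pow_right (by omega) hV
  refine ⟨2 * n, ?_, hdZ.1, hdZ.2, 0, x - y, sub_ne_zero.2 hxy, fun r hr hrZ s ↦ ?_⟩
  · rw [hZcard]
    push_cast
    refine hnη.trans (mul_le_mul_of_nonneg_left (Nat.lt_floor_add_one _).le hη0.le)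
  · exact hZ.mem_kSubsetSum_of_le (fun x ↦ ZModModule.char_nsmul_eq_zero p x) htp (hZcard ▸ hN)
      (hVcard.trans_lt hn) hr hrZ _

universe u

/-- If `Y` has no dispersed subset of size about `p / Q`, then some coset of a proper subspace
contains more than `p / Q ^ 3` of its elements, and one continues in that subspace with `Q ^ 3` in
place of `Q`. -/
theorem exists_isRich_subset {d k : ℕ} {η : ℝ} (hp : 3 ≤ p) (hd : 1 ≤ d) (hη0 : 0 < η)
    (hη : η ≤ 1 / 8) (hkd : k ≤ d) {V : Type u} [AddCommGroup V] [Module (ZMod p) V]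
    [FiniteDimensional (ZMod p) V] [DecidableEq V] (hV : finrank (ZMod p) V ≤ k) {Q : ℝ}
    (hlog : 442 * d * Real.log p ≤ η * Q) (hQp : Q ^ 3 ^ k ≤ p) {Y : Finset V} (hY : p / Q < #Y) :
    ∃ Z ⊆ Y, ∃ C : ℕ, C ≤ η * #Z ∧ d < #Z ∧ #Z < p ∧ IsRich (ZMod p) C Z := by
  have hd' : (1 : ℝ) ≤ d := by exact_mod_cast hd
  induction k generalizing V Q with
  | zero =>
    have hQ : 4 * (d : ℝ) ≤ Q := four_mul_le_of_mul_log_le hp hη0 hη hlog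
    have : Subsingleton V := finrank_zero_iff.1 (Nat.le_zero.1 hV)
    have hYcard : (#Y : ℝ) ≤ 1 := by exact_mod_cast card_le_one_of_subsingleton Y
    rw [pow_zero, pow_one] at hQp
    rw [div_lt_iff₀ (by linarith)] at hY
    nlinarith
  | succ k ih =>
    have hQ : 4 * (d : ℝ) ≤ Q := four_mul_le_of_mul_log_le hp hη0 hη hlog
    have hQ0 : 0 < Q := by linarith
    have hQ3 : Q ^ 3 ≤ p := (pow_le_pow_right₀ (by linarith)
      (by simpa using pow_le_pow_right₀ (by simp : 1 ≤ 3) (by omega : 1 ≤ k + 1))).trans hQp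
    obtain ⟨Z, hZY, hZcard⟩ : ∃ Z ⊆ Y, #Z = ⌊p / Q⌋₊ + 1 :=
      exists_subset_card_eq (Nat.succ_le_of_lt ((Nat.floor_lt (by positivity)).2 hY))
    by_cases hZ : IsDispersed ⌊p / Q ^ 3⌋₊ Z
    · exact ⟨Z, hZY, hZ.exists_isRich hp hd hη0 hη hlog hQ3 (hV.trans hkd) hZcard⟩
    · obtain ⟨U, hU, x, T, hT, hTZ⟩ := exists_submodule_image_subset_of_not_isDispersed (p := p) hZ
      have hinj : Function.Injective fun u ↦ x + U.subtype u :=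
        (add_right_injective x).comp U.injective_subtype
      have hUk : finrank (ZMod p) U ≤ k := by
        have := Submodule.finrank_lt hU
        omega
      have hlog3 : 442 * d * Real.log p ≤ η * Q ^ 3 := hlog.trans (by
        gcongr
        exact le_self_pow₀ (by linarith) (by simp))
      obtain ⟨S, hST, C, hC, hdS, hSp, hrich⟩ := ih (by omega) hUk hlog3
        (by rwa [← pow_mul, ← pow_succ']) (Nat.lt_of_floor_lt hT)
      refine ⟨_, (image_subset_image hST).trans (hTZ.trans hZY), C, ?_, ?_, ?_,
        hrich.image_add U.injective_subtype x⟩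
      all_goals rwa [card_image_of_injective _ hinj]

end Rich

section ZeroSum

theorem exists_maximal_pairwiseDisjoint {α : Type*} [DecidableEq α] (q : Finset α → Prop)
    (hq : ∀ Z, q Z → Z.Nonempty) (Y : Finset α) :
    ∃ P : Finset (Finset α), (∀ Z ∈ P, Z ⊆ Y ∧ q Z) ∧ (P : Set (Finset α)).PairwiseDisjoint id ∧
      ∀ Z ⊆ Y \ P.biUnion id, ¬ q Z := by
  classical
  let families : Finset (Finset (Finset α)) :=
    {P ∈ (Y.powerset.filter q).powerset | (P : Set (Finset α)).PairwiseDisjoint id}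
  have hmem {P : Finset (Finset α)} : P ∈ families ↔
      (∀ Z ∈ P, Z ⊆ Y ∧ q Z) ∧ (P : Set (Finset α)).PairwiseDisjoint id := by
    simp [families, subset_iff (s₁ := P)]
  obtain ⟨P, hP⟩ := families.exists_maximal ⟨∅, hmem.2 (by simp)⟩
  obtain ⟨hPq, hdisj⟩ := hmem.1 hP.prop
  refine ⟨P, hPq, hdisj, fun Z hZ hqZ ↦ (hq Z hqZ).ne_empty ?_⟩
  have hZdisj : Disjoint Z (P.biUnion id) := disjoint_sdiff_self_left.mono_left hZ
  have hins : insert Z P ⊆ P := hP.le_of_ge (hmem.2 ⟨?_, ?_⟩) (subset_insert Z P)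
  · exact disjoint_self.1 (hZdisj.mono_right
      (subset_biUnion_of_mem id (hins (mem_insert_self Z P))))
  · exact forall_mem_insert _ _ _ |>.2 ⟨⟨hZ.trans sdiff_subset, hqZ⟩, hPq⟩
  · rw [coe_insert]
    exact hdisj.insert fun T hT _ ↦ hZdisj.mono_right (subset_biUnion_of_mem id hT)

theorem exists_dual_forall_ne_zero_of_card_lt {ι K V : Type*} [Fintype ι] [Field K]
    [AddCommGroup V] [Module K V] {w : ι → V} (hw : ∀ i, w i ≠ 0)
    (hcard : Fintype.card ι < ENat.card K) : ∃ f : Dual K V, ∀ i, f (w i) ≠ 0 := by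
  have h := Submodule.iUnion_ssubset_of_forall_ne_top_of_card_lt univ
    (fun i ↦ LinearMap.ker (Dual.eval K V (w i)))
    (fun i htop ↦ hw i <| (forall_dual_apply_eq_zero_iff K (w i)).1 fun f ↦
      LinearMap.mem_ker.1 (htop ▸ Submodule.mem_top : f ∈ LinearMap.ker (Dual.eval K V (w i))))
    hcard
  obtain ⟨f, hf⟩ := (Set.ne_univ_iff_exists_notMem _).1 h.ne
  exact ⟨f, fun i hi ↦ hf (Set.mem_biUnion (mem_univ i) hi)⟩

theorem IsRich.exists_forall_dual {K V : Type*} [Field K] [AddCommGroup V] [Module K V]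
    [DecidableEq V] {C : ℕ} {Z : Finset V} (hZ : IsRich K C Z) :
    ∃ w : V, w ≠ 0 ∧ ∀ f : Dual K V, f w ≠ 0 → ∃ b : LinearMap.ker f,
      ∀ r, C ≤ r → r + C ≤ #Z → r • (b : V) ∈ kSubsetSum r Z := by
  obtain ⟨a, w, hw, hsums⟩ := hZ
  refine ⟨w, hw, fun f hfw ↦ ⟨⟨a - (f a / f w) • w, ?_⟩, fun r hr hrZ ↦ ?_⟩⟩
  · simp [hfw]
  · convert hsums r hr hrZ (-(r * (f a / f w))) using 1
    rw [smul_sub, neg_smul, mul_smul, Nat.cast_smul_eq_nsmul, sub_eq_add_neg]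

variable {p : ℕ} [Fact p.Prime]

theorem exists_finset_forall_eq_natCast {n : ℕ} (hn : n < p) (C : ℕ) :
    ∃ S : Finset (ZMod p), 0 ∈ S ∧ n - 2 * C ≤ #S - 1 ∧
      ∀ x ∈ S, x ≠ 0 → ∃ r : ℕ, C ≤ r ∧ r + C ≤ n ∧ (r : ZMod p) = x := by
  have hinj : Set.InjOn (Nat.cast : ℕ → ZMod p) (Icc C (n - C)) :=
    (CharP.natCast_injOn_Iio (ZMod p) p).mono fun r hr ↦ by
      have := (mem_Icc.1 hr).2
      rw [Set.mem_Iio]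
      omega
  refine ⟨insert 0 ((Icc C (n - C)).image Nat.cast), mem_insert_self _ _, ?_, fun x hx hx0 ↦ ?_⟩
  · have h := card_le_card (subset_insert (0 : ZMod p) ((Icc C (n - C)).image Nat.cast))
    rw [card_image_of_injOn hinj, Nat.card_Icc] at h
    omega
  · obtain ⟨r, hr, rfl⟩ := mem_image.1 (mem_of_mem_insert_of_ne hx hx0)
    have hr' := mem_Icc.1 hr
    have hr0 : r ≠ 0 := by
      rintro rfl
      exact hx0 Nat.cast_zero
    exact ⟨r, hr'.1, by omega, rfl⟩

theorem exists_sum_eq_zero_of_isRich {ι V : Type*} [Fintype ι] [AddCommGroup V]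
    [Module (ZMod p) V] [FiniteDimensional (ZMod p) V] [DecidableEq V] {Z : ι → Finset V}
    {C : ι → ℕ} (hZ : ∀ i, IsRich (ZMod p) (C i) (Z i)) (hZp : ∀ i, #(Z i) < p)
    (hdisj : Pairwise (Function.onFun Disjoint Z)) (hι : Fintype.card ι < p)
    (hcard : (finrank (ZMod p) V - 1) * (p - 1) < ∑ i, (#(Z i) - 2 * C i)) :
    ∃ B ⊆ univ.biUnion Z, B.Nonempty ∧ ∑ x ∈ B, x = 0 := by
  choose w hw hdual using fun i ↦ (hZ i).exists_forall_dual
  obtain ⟨f, hf⟩ := exists_dual_forall_ne_zero_of_card_lt (K := ZMod p) hw (by simpa using hι)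
  choose b hb using fun i ↦ hdual i f (hf i)
  choose S hS0 hScard hS using fun i ↦ exists_finset_forall_eq_natCast (hZp i) (C i)
  obtain ⟨i₀, -⟩ : ∃ i : ι, i ∈ univ := nonempty_of_sum_ne_zero (Nat.ne_zero_of_lt hcard)
  have hker : finrank (ZMod p) (LinearMap.ker f) + 1 = finrank (ZMod p) V :=
    Dual.finrank_ker_add_one_of_ne_zero fun h ↦ hf i₀ (by simp [h])
  obtain ⟨x, hxS, hx0, hxb⟩ := exists_ne_zero_sum_smul_eq_zero hS0 b <| by
    rw [ZMod.card, ← Nat.add_sub_cancel (n := finrank _ _) (m := 1), hker]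
    exact hcard.trans_le (sum_le_sum fun i _ ↦ hScard i)
  have hpiece (i : ι) : ∃ B ⊆ Z i, (x i ≠ 0 → B.Nonempty) ∧ ∑ v ∈ B, v = x i • (b i : V) := by
    by_cases hxi : x i = 0
    · exact ⟨∅, empty_subset _, absurd hxi, by simp [hxi]⟩
    · obtain ⟨r, hCr, hrC, hrx⟩ := hS i (x i) (hxS i) hxi
      obtain ⟨B, hBZ, hBcard, hBsum⟩ := mem_kSubsetSum.1 (hb i r hCr hrC)
      refine ⟨B, hBZ, fun _ ↦ card_ne_zero.1 fun hB ↦ hxi ?_, ?_⟩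
      · rw [← hrx, ← hBcard, hB, Nat.cast_zero]
      · rw [hBsum, ← hrx, Nat.cast_smul_eq_nsmul]
  choose B hBZ hBne hBsum using hpiece
  obtain ⟨i, hi⟩ := Function.ne_iff.1 hx0
  refine ⟨univ.biUnion B, biUnion_mono fun i _ ↦ hBZ i,
    (hBne i hi).mono (subset_biUnion_of_mem B (mem_univ i)), ?_⟩
  rw [sum_biUnion fun i _ j _ hij ↦ (hdisj hij).mono (hBZ i) (hBZ j)]
  simpa [hBsum] using congrArg (Submodule.subtype _) hxb

end ZeroSum

section OlsonConstant

theorem eventually_mul_log_pow_le (L : ℝ) (k : ℕ) :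
    ∀ᶠ p : ℕ in Filter.atTop, (L * Real.log p) ^ k ≤ p := by
  have h := ((Real.isLittleO_pow_log_id_atTop (n := k)).const_mul_left (L ^ k)).comp_tendsto
    tendsto_natCast_atTop_atTop
  filter_upwards [h.bound one_pos] with p hp
  rw [mul_pow]
  simpa using (le_abs_self _).trans hp

theorem exists_subset_card_mem_Icc {α : Type*} {X : Finset α} {x : ℝ} {n : ℕ} (hX : x ≤ #X)
    (hn : x ≤ n) : ∃ Y ⊆ X, x ≤ #Y ∧ #Y ≤ n := by
  obtain ⟨Y, hYX, hY⟩ := exists_subset_card_eq (Nat.ceil_le.2 hX)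
  exact ⟨Y, hYX, hY ▸ Nat.le_ceil x, hY ▸ Nat.ceil_le.2 hn⟩

theorem card_lt_of_card_biUnion_le {α : Type*} [DecidableEq α] {d m : ℕ} {P : Finset (Finset α)}
    (hdisj : (P : Set (Finset α)).PairwiseDisjoint id) (hP : ∀ Z ∈ P, d < #Z) (hm : 0 < m)
    (h : #(P.biUnion id) ≤ d * m) : #P < m := by
  rw [card_biUnion hdisj] at h
  have hsum : #P * (d + 1) ≤ ∑ Z ∈ P, #Z := by
    simpa using card_nsmul_le_sum P card (d + 1) hP
  have : #P * (d + 1) < m * (d + 1) := by linarith [hsum.trans h]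
  exact lt_of_mul_lt_mul_right this (Nat.zero_le _)

variable {p : ℕ} [Fact p.Prime] {V : Type*} [AddCommGroup V] [Module (ZMod p) V]
  [FiniteDimensional (ZMod p) V]

theorem exists_sum_eq_zero_of_pairwiseDisjoint [DecidableEq V] {η : ℝ} {P : Finset (Finset V)}
    (hdisj : (P : Set (Finset V)).PairwiseDisjoint id)
    (hP : ∀ Z ∈ P, ∃ C : ℕ, C ≤ η * #Z ∧ #Z < p ∧ IsRich (ZMod p) C Z) (hPp : #P < p)
    (hcard : ((finrank (ZMod p) V - 1 : ℕ) : ℝ) * p < (1 - 2 * η) * #(P.biUnion id)) :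
    ∃ B ⊆ P.biUnion id, B.Nonempty ∧ ∑ x ∈ B, x = 0 := by
  choose C hC hZp hrich using fun Z : P ↦ hP Z Z.2
  have hsum : (1 - 2 * η) * #(P.biUnion id) ≤ (∑ Z : P, (#Z.1 - 2 * C Z) : ℕ) := by
    rw [card_biUnion hdisj, ← sum_coe_sort, Nat.cast_sum, mul_sum, Nat.cast_sum]
    refine sum_le_sum fun Z _ ↦ ?_
    have h : (#Z.1 : ℝ) ≤ (#Z.1 - 2 * C Z : ℕ) + 2 * C Z := by exact_mod_cast le_tsub_add
    have := hC Z
    simp only [id_eq]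
    linarith
  have hbox : (finrank (ZMod p) V - 1) * (p - 1) < ∑ Z : P, (#Z.1 - 2 * C Z) := by
    refine (Nat.mul_le_mul_left _ (Nat.sub_le p 1)).trans_lt ?_
    exact_mod_cast hcard.trans_le hsum
  obtain ⟨B, hB, hB0⟩ := exists_sum_eq_zero_of_isRich hrich hZp
    (fun Z T hZT ↦ hdisj Z.2 T.2 (Subtype.coe_ne_coe.2 hZT)) (by simpa using hPp) hbox
  exact ⟨B, hB.trans (biUnion_subset.2 fun Z _ ↦ subset_biUnion_of_mem id Z.2), hB0⟩

theorem exists_pairwiseDisjoint_isRich [DecidableEq V] {η Q : ℝ} (hp : 3 ≤ p)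
    (hd : 1 ≤ finrank (ZMod p) V) (hη0 : 0 < η) (hη : η ≤ 1 / 8)
    (hlog : 442 * finrank (ZMod p) V * Real.log p ≤ η * Q)
    (hQp : Q ^ 3 ^ finrank (ZMod p) V ≤ p) (Y : Finset V) :
    ∃ P : Finset (Finset V), (P : Set (Finset V)).PairwiseDisjoint id ∧ P.biUnion id ⊆ Y ∧
      (∀ Z ∈ P, finrank (ZMod p) V < #Z ∧
        ∃ C : ℕ, C ≤ η * #Z ∧ #Z < p ∧ IsRich (ZMod p) C Z) ∧
      #Y ≤ #(P.biUnion id) + p / Q := by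
  obtain ⟨P, hP, hdisj, hmax⟩ := exists_maximal_pairwiseDisjoint
    (fun Z : Finset V ↦ finrank (ZMod p) V < #Z ∧
      ∃ C : ℕ, C ≤ η * #Z ∧ #Z < p ∧ IsRich (ZMod p) C Z)
    (fun Z hZ ↦ card_pos.1 (Nat.zero_lt_of_lt hZ.1)) Y
  have hPY : P.biUnion id ⊆ Y := biUnion_subset.2 fun Z hZ ↦ (hP Z hZ).1
  refine ⟨P, hdisj, hPY, fun Z hZ ↦ (hP Z hZ).2, ?_⟩
  have hrest : (#(Y \ P.biUnion id) : ℝ) ≤ p / Q := by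
    by_contra! h
    obtain ⟨Z, hZ, C, hC, hdZ, hZp, hrich⟩ :=
      exists_isRich_subset hp hd hη0 hη le_rfl le_rfl hlog hQp h
    exact hmax Z hZ ⟨hdZ, C, hC, hZp, hrich⟩
  rw [cast_card_sdiff hPY] at hrest
  linarith

theorem exists_sum_eq_zero_of_le_card {d : ℕ} (hV : finrank (ZMod p) V = d) {ε η Q : ℝ}
    (hp : 3 ≤ p) (hd : 1 ≤ d) (hε0 : 0 < ε) (hε1 : ε ≤ 1) (hη : η * (8 * d) = ε)
    (hlog : 442 * d * Real.log p ≤ η * Q) (hQp : Q ^ 3 ^ d ≤ p) {X : Finset V}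
    (hX : (d - 1 + ε) * p ≤ #X) : ∃ B ⊆ X, B.Nonempty ∧ ∑ x ∈ B, x = 0 := by
  classical
  have hd' : (1 : ℝ) ≤ d := by exact_mod_cast hd
  have hη0 : 0 < η := pos_of_mul_pos_left (hη ▸ hε0) (by positivity)
  have hη8 : η ≤ 1 / 8 := by nlinarith
  have hQ0 : 0 < Q := by linarith [four_mul_le_of_mul_log_le hp hη0 hη8 hlog]
  obtain ⟨Y, hYX, hYlower, hYupper⟩ := exists_subset_card_mem_Icc hX (n := d * p) <| by
    push_cast
    gcongr
    linarith
  obtain ⟨P, hdisj, hPY, hP, hPcard⟩ := exists_pairwiseDisjoint_isRich hp (hV ▸ hd) hη0 hη8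
    (hV ▸ hlog) (hV ▸ hQp) Y
  have hPp : #P < p := card_lt_of_card_biUnion_le hdisj (fun Z hZ ↦ hV ▸ (hP Z hZ).1) (by omega)
    ((card_le_card hPY).trans hYupper)
  have hpQ : p / Q ≤ ε / 4 * p := by
    have h1 : 1 ≤ d * Real.log p := one_le_mul_of_one_le_of_one_le hd' (one_le_log_natCast hp)
    have hεQ : 4 ≤ ε * Q := by
      rw [← hη]
      nlinarith
    rw [div_le_iff₀ hQ0]
    nlinarith
  have hcard : ((d - 1 : ℕ) : ℝ) * p < (1 - 2 * η) * #(P.biUnion id) := by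
    rw [Nat.cast_sub hd, Nat.cast_one]
    calc ((d : ℝ) - 1) * p < (1 - 2 * η) * ((d - 1 + 3 / 4 * ε) * p) := by
          have : (d : ℝ) - 1 < (1 - 2 * η) * (d - 1 + 3 / 4 * ε) := by nlinarith
          rw [← mul_assoc]
          gcongr
      _ ≤ (1 - 2 * η) * #(P.biUnion id) := by
          gcongr
          · linarith
          · linarith
  obtain ⟨B, hBP, hB⟩ := exists_sum_eq_zero_of_pairwiseDisjoint hdisj (fun Z hZ ↦ (hP Z hZ).2) hPp
    (hV ▸ hcard)
  exact ⟨B, hBP.trans (hPY.trans hYX), hB⟩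

universe u

theorem olson_constant_bound_general (d : ℕ) (hd : 1 ≤ d) (ε : ℝ) (hε : 0 < ε) :
    ∃ p₀ : ℕ, ∀ p : ℕ, [Fact p.Prime] → p₀ < p → ∀ (V : Type u) [AddCommGroup V]
      [Module (ZMod p) V], finrank (ZMod p) V = d → ∀ X : Finset V,
        ((d : ℝ) - 1 + ε) * p ≤ #X → ∃ B ⊆ X, B.Nonempty ∧ ∑ x ∈ B, x = 0 := by
  wlog hε1 : ε ≤ 1 generalizing ε
  · obtain ⟨p₀, h⟩ := this 1 one_pos le_rfl
    refine ⟨p₀, fun p _ hp V _ _ hV X hX ↦ h p hp V hV X (le_trans ?_ hX)⟩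
    gcongr
    exact (not_le.1 hε1).le
  obtain ⟨p₀, hp₀⟩ := Filter.eventually_atTop.1 <|
    (eventually_mul_log_pow_le (442 * d / (ε / (8 * d))) (3 ^ d)).and (Filter.eventually_ge_atTop 3)
  refine ⟨p₀, fun p _ hp V _ _ hV X hX ↦ ?_⟩
  obtain ⟨hlog, hp3⟩ := hp₀ p hp.le
  have : FiniteDimensional (ZMod p) V := .of_finrank_pos (by omega)
  have hd0 : (0 : ℝ) < d := by exact_mod_cast hd
  refine exists_sum_eq_zero_of_le_card hV hp3 hd hε hε1 (η := ε / (8 * d)) ?_ ?_ hlog hX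
  all_goals field_simp
  rfl

end OlsonConstant

/-- For every fixed `d ≥ 2` and `ε > 0` there exists `p₀` such that for every
prime `p > p₀`, every subset `X ⊆ 𝔽_p^d` with `|X| ≥ (d - 1 + ε) p` contains a nonempty
subset `B` with `∑_{x ∈ B} x = 0`. -/
theorem olson_constant_bound (d : ℕ) (hd : 2 ≤ d) (ε : ℝ) (hε : 0 < ε) :
    ∃ p₀ : ℕ, ∀ p : ℕ, p.Prime → p₀ < p →
      ∀ X : Finset (Fin d → ZMod p),
        ((d : ℝ) - 1 + ε) * (p : ℝ) ≤ (X.card : ℝ) →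
        ∃ B ⊆ X, B.Nonempty ∧ ∑ x ∈ B, x = 0 := by
  obtain ⟨p₀, h⟩ := olson_constant_bound_general d (by omega) ε hε
  exact ⟨p₀, fun p hp hpp ↦ have : Fact p.Prime := ⟨hp⟩; h p hpp _ (finrank_fin_fun _)⟩
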